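/- arXiv:2211.08529 — 2 statements merged into one kernel-verified Lean document; each statement's English description precedes it below -/
import Mathlib

section
/- Fix ℏ ∈ ℂ with ℏ ∉ ℤ + τℤ and write φ(z) = φ(ℏ,z). For every integer N ≥ 1, every integer k with 1 ≤ k ≤ N, and all x₁,…,x_N, y₁,…,y_N ∈ ℂ such that every argument of φ occurring below lies off the lattice ℤ + τℤ, one has ∑_{I⊂{1,…,N},|I|=k} ( ∏_{i∈I, j∉I} φ(x_i−x_j) · ∏_{i∈I} ∏_{j=1}^{N} φ(y_j−x_i) − ∏_{i∈I, j∉I} φ(y_j−y_i) · ∏_{i∈I} ∏_{j=1}^{N} φ(y_i−x_j) ) = 0. (This is the M = 1 case of the R-matrix identities.) -/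
open Complex Finset Filter
open scoped BigOperators Topology

noncomputable section

/-- The lattice `ℤ + τℤ ⊂ ℂ`. -/
def lat (τ : ℂ) : Set ℂ := {w : ℂ | ∃ m n : ℤ, w = (m : ℂ) + (n : ℂ) * τ}

/-- The odd theta function `ϑ(z|τ)`. -/
def theta (τ z : ℂ) : ℂ :=
  -∑' k : ℤ, Complex.exp ((Real.pi : ℂ) * Complex.I * τ * ((k : ℂ) + 1/2)^2
      + 2 * (Real.pi : ℂ) * Complex.I * (z + 1/2) * ((k : ℂ) + 1/2))

/-- The Kronecker elliptic function `φ(z,u) = ϑ'(0)ϑ(z+u)/(ϑ(z)ϑ(u))`. -/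
def phi (τ z u : ℂ) : ℂ :=
  deriv (theta τ) 0 * theta τ (z + u) / (theta τ z * theta τ u)


lemma lat_small (τ : ℂ) (hτ : 0 < τ.im) : ∃ ε > 0, ∀ w ∈ lat τ, ‖w‖ < ε → w = 0 := by
  refine ⟨min 1 τ.im, lt_min one_pos hτ, ?_⟩
  rintro w ⟨m, n, rfl⟩ h
  have h1 := lt_of_lt_of_le h (min_le_left _ _)
  have h2 := lt_of_lt_of_le h (min_le_right _ _)
  have h3 := (abs_im_le_norm ((m:ℂ) + n * τ)).trans_lt h2
  have him : ((m:ℂ) + n * τ).im = n * τ.im := by simp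
  rw [him, abs_mul, abs_of_pos hτ] at h3
  have h4 : |(n:ℝ)| < 1 := by
    by_contra hc
    push Not at hc
    nlinarith
  have hn : n = 0 := by
    have : |n| < 1 := by exact_mod_cast h4
    exact Int.abs_lt_one_iff.mp this
  subst hn
  have h5 : ‖(m:ℂ)‖ < 1 := by simpa using h1
  rw [Complex.norm_intCast] at h5
  have hm : m = 0 := by
    have : |m| < 1 := by exact_mod_cast h5
    exact Int.abs_lt_one_iff.mp this
  subst hm
  simp

lemma lat_sub {τ a b : ℂ} (ha : a ∈ lat τ) (hb : b ∈ lat τ) : a - b ∈ lat τ := by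
  obtain ⟨m, n, rfl⟩ := ha
  obtain ⟨m', n', rfl⟩ := hb
  exact ⟨m - m', n - n', by push_cast; ring⟩

lemma lat_zero (τ : ℂ) : (0:ℂ) ∈ lat τ := ⟨0, 0, by simp⟩

lemma lat_neg {τ a : ℂ} (ha : a ∈ lat τ) : -a ∈ lat τ := by
  simpa using lat_sub (lat_zero τ) ha

lemma lat_add {τ a b : ℂ} (ha : a ∈ lat τ) (hb : b ∈ lat τ) : a + b ∈ lat τ := by
  simpa using lat_sub ha (lat_neg hb)

lemma lat_disc (τ : ℂ) (hτ : 0 < τ.im) (z : ℂ) : ∀ᶠ w in 𝓝[≠] z, w ∉ lat τ := by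
  obtain ⟨ε, hε, h⟩ := lat_small τ hτ
  have hb : ∀ᶠ w in 𝓝[≠] z, w ∈ Metric.ball z (ε/2) :=
    nhdsWithin_le_nhds (Metric.ball_mem_nhds z (half_pos hε))
  by_cases hex : ∃ l ∈ lat τ, l ∈ Metric.ball z (ε/2)
  · obtain ⟨l, hl, hlb⟩ := hex
    have hne : ∀ᶠ w in 𝓝[≠] z, w ≠ l := by
      by_cases hzl : z = l
      · subst hzl
        exact eventually_mem_nhdsWithin
      · exact nhdsWithin_le_nhds (isOpen_ne.mem_nhds hzl)
    filter_upwards [hb, hne] with w hw hwl hwlat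
    apply hwl
    have := h (w - l) (lat_sub hwlat hl) (by
      rw [← dist_eq_norm]
      calc dist w l ≤ dist w z + dist l z := dist_triangle_right _ _ _
        _ < ε/2 + ε/2 := add_lt_add hw hlb
        _ = ε := by ring)
    exact sub_eq_zero.mp this
  · push Not at hex
    filter_upwards [hb] with w hw hwl
    exact hex w hwl hw

/-- affine perturbations avoid the lattice -/
lemma lat_pert (τ : ℂ) (hτ : 0 < τ.im) (w c : ℂ) (hc : c ≠ 0) :
    ∀ᶠ t in 𝓝[≠] (0:ℂ), w + t * c ∉ lat τ := by
  have h := lat_disc τ hτ w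
  have ht : Tendsto (fun t : ℂ => w + t * c) (𝓝[≠] 0) (𝓝[≠] w) := by
    apply tendsto_nhdsWithin_of_tendsto_nhds_of_eventually_within
    · have : ContinuousAt (fun t : ℂ => w + t * c) 0 := by fun_prop
      have h2 := this.tendsto
      simp only [zero_mul, add_zero] at h2
      exact h2.mono_left nhdsWithin_le_nhds
    · filter_upwards [eventually_mem_nhdsWithin] with t ht
      simpa [hc] using ht
  exact ht.eventually h

lemma key (τ : ℂ) (hτ : 0 < τ.im) (F : ℂ → ℂ) (S : Set ℂ)
    (hS : ∀ z, ∀ᶠ w in 𝓝[≠] z, w ∉ S)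
    (hd : ∀ z ∉ S, DifferentiableAt ℂ F z)
    (hp : ∀ p ∈ S, Tendsto (fun z => (z - p) * F z) (𝓝[≠] p) (𝓝 0))
    (α β : ℂ) (hα : ‖α‖ = 1) (hβ : ‖β‖ = 1)
    (h1 : ∀ z, F (z + 1) = α * F z) (h2 : ∀ z, F (z + τ) = β * F z) :
    ∃ C, ∀ z ∉ S, F z = C := by
  set G : ℂ → ℂ := fun z => limUnder (𝓝[≠] z) F with hG
  have hGF : ∀ z ∉ S, G z = F z := fun z hz =>
    ((hd z hz).continuousAt.tendsto.mono_left nhdsWithin_le_nhds).limUnder_eq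
  have hp' : ∀ p, Tendsto (fun z => (z - p) * F z) (𝓝[≠] p) (𝓝 0) := by
    intro p
    by_cases hpS : p ∈ S
    · exact hp p hpS
    · have : ContinuousAt (fun z => (z - p) * F z) p := by
        have := (hd p hpS).continuousAt
        fun_prop
      have h := this.tendsto
      simp only [sub_self, zero_mul] at h
      exact h.mono_left nhdsWithin_le_nhds
  have hGd : Differentiable ℂ G := by
    intro p
    have he := hS p
    rw [eventually_nhdsWithin_iff] at he
    set s : Set ℂ := {w | w ∈ ({p}ᶜ : Set ℂ) → w ∉ S} with hs
    have hs' : s ∈ 𝓝 p := he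
    have hD := differentiableOn_update_limUnder_of_isLittleO (f := F) (c := p) hs'
      (fun w hw => (hd w (hw.1 hw.2)).differentiableWithinAt) (by
        have h0 : Tendsto (fun z => (z - p) * (F z - F p)) (𝓝[≠] p) (𝓝 0) := by
          have h3 : Tendsto (fun z => (z - p) * F p) (𝓝[≠] p) (𝓝 0) := by
            have : ContinuousAt (fun z => (z - p) * F p) p := by fun_prop
            have h := this.tendsto
            simp only [sub_self, zero_mul] at h
            exact h.mono_left nhdsWithin_le_nhds
          have := (hp' p).sub h3
          simpa [mul_sub] using this
        rw [Asymptotics.isLittleO_iff_tendsto']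
        · refine h0.congr fun z => ?_
          rw [div_inv_eq_mul, mul_comm]
        · filter_upwards [eventually_mem_nhdsWithin] with z hz h
          simp only [inv_eq_zero, sub_eq_zero] at h
          exact absurd h hz)
    have hDp := hD.differentiableAt hs'
    refine hDp.congr_of_eventuallyEq ?_
    filter_upwards [hs'] with w hw
    by_cases hwp : w = p
    · subst hwp; simp [hG]
    · rw [Function.update_of_ne hwp]
      exact hGF w (hw hwp)
  have hper : ∀ c γ : ℂ, (∀ z, F (z + c) = γ * F z) → ∀ z, G (z + c) = γ * G z := by
    intro c γ h z
    have ht : Tendsto (fun w : ℂ => w + c) (𝓝[≠] z) (𝓝[≠] (z + c)) := by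
      apply tendsto_nhdsWithin_of_tendsto_nhds_of_eventually_within
      · have : ContinuousAt (fun t : ℂ => t + c) z := by fun_prop
        exact this.tendsto.mono_left nhdsWithin_le_nhds
      · filter_upwards [eventually_mem_nhdsWithin] with t ht
        simpa using ht
    have e : (fun w => G (w + c)) =ᶠ[𝓝[≠] z] fun w => γ * G w := by
      filter_upwards [hS z, ht.eventually (hS (z + c))] with w hw hw2
      rw [hGF w hw, hGF _ hw2, h]
    have c1 : Tendsto (fun w => G (w + c)) (𝓝[≠] z) (𝓝 (G (z + c))) :=
      (hGd (z + c)).continuousAt.tendsto.comp (ht.mono_right nhdsWithin_le_nhds)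
    have c2 : Tendsto (fun w => γ * G w) (𝓝[≠] z) (𝓝 (γ * G z)) :=
      ((hGd z).continuousAt.tendsto.mono_left nhdsWithin_le_nhds).const_mul γ
    exact tendsto_nhds_unique (c1.congr' e) c2
  have hG1 : Function.Periodic (fun z => ‖G z‖) 1 := fun z => by
    simp [hper 1 α h1 z, hα]
  have hG2 : Function.Periodic (fun z => ‖G z‖) τ := fun z => by
    simp [hper τ β h2 z, hβ]
  have hcpt : IsCompact ((fun p : ℝ × ℝ => (p.1 : ℂ) + p.2 * τ) '' (Set.Icc 0 1 ×ˢ Set.Icc 0 1)) :=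
    (isCompact_Icc.prod isCompact_Icc).image (by fun_prop)
  obtain ⟨B, hB⟩ := hcpt.exists_bound_of_continuousOn (f := G) hGd.continuous.continuousOn
  have hbd : ∀ z, ‖G z‖ ≤ B := by
    intro z
    set t := z.im / τ.im
    set s := z.re - t * τ.re
    have hz : z = (s : ℂ) + t * τ := by
      apply Complex.ext
      · simp [s]
      · simp [t, hτ.ne']
    have hz2 : z = ((Int.fract s : ℝ) : ℂ) + (Int.fract t : ℝ) * τ + ⌊s⌋ * 1 + ⌊t⌋ * τ := by
      rw [hz, Int.fract, Int.fract]
      push_cast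
      ring
    rw [hz2]
    have e1 := hG2.int_mul ⌊t⌋ (((Int.fract s : ℝ) : ℂ) + (Int.fract t : ℝ) * τ + ⌊s⌋ * 1)
    have e2 := hG1.int_mul ⌊s⌋ (((Int.fract s : ℝ) : ℂ) + (Int.fract t : ℝ) * τ)
    rw [e1, e2]
    apply hB
    exact ⟨(Int.fract s, Int.fract t), ⟨⟨Int.fract_nonneg _, (Int.fract_lt_one _).le⟩,
      ⟨Int.fract_nonneg _, (Int.fract_lt_one _).le⟩⟩, rfl⟩
  refine ⟨G 0, fun z hz => ?_⟩
  rw [← hGF z hz]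
  refine hGd.apply_eq_apply_of_bounded ?_ z 0
  rw [isBounded_iff_forall_norm_le]
  exact ⟨B, by rintro _ ⟨w, rfl⟩; exact hbd w⟩

/-- transport of the removable-pole condition by lattice translations -/
lemma pole_shift (τ : ℂ) (F : ℂ → ℂ) (α β : ℂ) (hα : α ≠ 0) (hβ : β ≠ 0)
    (h1 : ∀ z, F (z + 1) = α * F z) (h2 : ∀ z, F (z + τ) = β * F z)
    (p l : ℂ) (hl : l ∈ lat τ)
    (hp : Tendsto (fun z => (z - p) * F z) (𝓝[≠] p) (𝓝 0)) :
    Tendsto (fun z => (z - (p + l)) * F z) (𝓝[≠] (p + l)) (𝓝 0) := by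
  have hgen : ∀ c γ : ℂ, γ ≠ 0 → (∀ z, F (z + c) = γ * F z) → ∀ n : ℤ, ∀ z,
      F (z + n * c) = γ ^ n * F z := by
    intro c γ hγ h n
    induction n with
    | zero => simp
    | succ n ih =>
      intro z
      have := h (z + n * c)
      push_cast at ih ⊢
      rw [show z + (n + 1) * c = z + n * c + c by ring, this, ih, zpow_add_one₀ hγ]
      ring
    | pred n ih =>
      intro z
      have := h (z + ((-(n:ℤ) - 1 : ℤ) : ℂ) * c)
      rw [show z + ((-(n:ℤ) - 1 : ℤ) : ℂ) * c + c = z + ((-(n:ℤ) : ℤ) : ℂ) * c by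
        push_cast; ring, ih] at this
      rw [zpow_sub_one₀ hγ]
      field_simp
      rw [this, mul_comm]
  obtain ⟨m, n, rfl⟩ := hl
  have hF : ∀ z, F z = β ^ n * α ^ m * F (z - (m + n * τ)) := by
    intro z
    have e2 := hgen τ β hβ h2 n (z - n * τ)
    have e1 := hgen 1 α hα h1 m (z - (m + n * τ))
    rw [show z - n * τ + n * τ = z by ring] at e2
    rw [show z - (m + n * τ) + m * 1 = z - n * τ by ring] at e1
    rw [e2, e1]; ring
  set l : ℂ := m + n * τ
  have ht : Tendsto (fun w : ℂ => w - l) (𝓝[≠] (p + l)) (𝓝[≠] p) := by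
    apply tendsto_nhdsWithin_of_tendsto_nhds_of_eventually_within
    · have : ContinuousAt (fun t : ℂ => t - l) (p + l) := by fun_prop
      have h := this.tendsto
      simp only [add_sub_cancel_right] at h
      exact h.mono_left nhdsWithin_le_nhds
    · filter_upwards [eventually_mem_nhdsWithin] with t ht
      simp only [Set.mem_compl_iff, Set.mem_singleton_iff] at ht ⊢
      exact fun h => ht (by rw [← h]; ring)
  have := (hp.comp ht).const_mul (β ^ n * α ^ m)
  rw [mul_zero] at this
  refine this.congr fun z => ?_
  simp only [Function.comp]
  rw [hF z]
  ring

lemma key0 (τ : ℂ) (hτ : 0 < τ.im) (F : ℂ → ℂ) (S : Set ℂ)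
    (hS : ∀ z, ∀ᶠ w in 𝓝[≠] z, w ∉ S)
    (hS1 : ∀ z ∉ S, z + 1 ∉ S) (hS2 : ∀ z ∉ S, z + τ ∉ S)
    (hd : ∀ z ∉ S, DifferentiableAt ℂ F z)
    (hp : ∀ p ∈ S, Tendsto (fun z => (z - p) * F z) (𝓝[≠] p) (𝓝 0))
    (c : ℂ) (hc0 : c ≠ 0) (hc : ∀ n : ℤ, c ≠ cexp (2 * Real.pi * I * (n * τ)))
    (h1 : ∀ z, F (z + 1) = F z) (h2 : ∀ z, F (z + τ) = c * F z) :
    ∀ z ∉ S, F z = 0 := by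
  set s : ℂ := Complex.log c / (2 * Real.pi * I) with hs
  have hpi : (2 * Real.pi * I : ℂ) ≠ 0 := by simp [Real.pi_ne_zero]
  have hcs : c = cexp (2 * Real.pi * I * s) := by
    rw [hs, mul_div_cancel₀ _ hpi, Complex.exp_log hc0]
  set b : ℝ := s.im / τ.im
  set a : ℝ := s.re - b * τ.re
  have hsab : s = (a : ℂ) + b * τ := by
    apply Complex.ext
    · simp [a]
    · simp [b, hτ.ne']
  set E : ℂ → ℂ := fun z => cexp (-(2 * Real.pi * I * (b * z))) with hE
  have hunit : ∀ t : ℝ, ‖cexp (2 * Real.pi * I * t)‖ = 1 := by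
    intro t
    rw [show (2 * Real.pi * I * t : ℂ) = ((2 * Real.pi * t : ℝ) : ℂ) * I by push_cast; ring]
    exact norm_exp_ofReal_mul_I _
  have e1 : ∀ z, F (z + 1) * E (z + 1) = cexp (2 * Real.pi * I * ((-b : ℝ) : ℂ)) * (F z * E z) := by
    intro z
    have : E (z + 1) = cexp (2 * Real.pi * I * ((-b : ℝ) : ℂ)) * E z := by
      simp only [hE]
      rw [← Complex.exp_add]
      congr 1
      push_cast
      ring
    rw [h1, this]; ring
  have e2 : ∀ z, F (z + τ) * E (z + τ) = cexp (2 * Real.pi * I * (a : ℂ)) * (F z * E z) := by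
    intro z
    have : c * E (z + τ) = cexp (2 * Real.pi * I * (a : ℂ)) * E z := by
      simp only [hE]
      rw [hcs, ← Complex.exp_add, ← Complex.exp_add]
      congr 1
      rw [hsab]
      ring
    rw [h2]
    linear_combination (F z) * this
  have hEd : ∀ z, DifferentiableAt ℂ E z := fun z => by simp only [hE]; fun_prop
  obtain ⟨C, hC⟩ := key τ hτ (fun z => F z * E z) S hS
    (fun z hz => (hd z hz).mul (hEd z))
    (fun p hp' => by
      have := (hp p hp').mul ((hEd p).continuousAt.tendsto.mono_left
        (nhdsWithin_le_nhds (s := {p}ᶜ)))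
      rw [zero_mul] at this
      exact this.congr fun z => by ring)
    _ _ (hunit _) (hunit _) e1 e2
  intro z hz
  by_contra hne
  have hE0 : F z * E z ≠ 0 := mul_ne_zero hne (Complex.exp_ne_zero _)
  have f1 := e1 z
  have f2 := e2 z
  have g1 := hC (z+1) (hS1 z hz)
  have g2 := hC (z+τ) (hS2 z hz)
  have g0 := hC z hz
  rw [g1, g0] at f1
  rw [g2, g0] at f2
  rw [g0] at hE0
  have k1 : cexp (2 * Real.pi * I * ((-b : ℝ) : ℂ)) = 1 := by
    apply mul_right_cancel₀ hE0; rw [← f1, one_mul]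
  have k2 : cexp (2 * Real.pi * I * (a : ℂ)) = 1 := by
    apply mul_right_cancel₀ hE0; rw [← f2, one_mul]
  rw [Complex.exp_eq_one_iff] at k1
  obtain ⟨n, hn⟩ := k1
  have hb : (b : ℂ) = ((-n : ℤ) : ℂ) := by
    have : (2 * Real.pi * I : ℂ) * ((-b : ℝ) : ℂ) = (2 * Real.pi * I) * n := by rw [hn]; ring
    have := mul_left_cancel₀ hpi this
    push_cast at this ⊢
    rw [← this]; ring
  apply hc (-n)
  rw [hcs, hsab, mul_add, Complex.exp_add, k2, one_mul, hb]

/-- one side of the identity -/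
def Lsum (f : ℂ → ℂ) {ι κ : Type*} [DecidableEq ι] (X : Finset ι) (Y : Finset κ)
    (x : ι → ℂ) (y : κ → ℂ) (k : ℕ) : ℂ :=
  ∑ I ∈ X.powersetCard k, (∏ i ∈ I, ∏ j ∈ X \ I, f (x i - x j)) * ∏ i ∈ I, ∏ j ∈ Y, f (y j - x i)

lemma Lsum_insert (f : ℂ → ℂ) {ι κ : Type*} [DecidableEq ι] (X : Finset ι) (Y : Finset κ)
    (x : ι → ℂ) (y : κ → ℂ) (k : ℕ) (a : ι) (ha : a ∉ X) :
    Lsum f (insert a X) Y x y (k + 1) =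
      (∑ I ∈ X.powersetCard (k + 1), (∏ i ∈ I, ∏ j ∈ insert a X \ I, f (x i - x j)) *
        ∏ i ∈ I, ∏ j ∈ Y, f (y j - x i)) +
      ∑ I ∈ X.powersetCard k, ((∏ j ∈ X \ I, f (x a - x j)) * (∏ i ∈ I, ∏ j ∈ X \ I, f (x i - x j)))
        * ((∏ j ∈ Y, f (y j - x a)) * ∏ i ∈ I, ∏ j ∈ Y, f (y j - x i)) := by
  have hsub : ∀ {m : ℕ} {I : Finset ι}, I ∈ X.powersetCard m → a ∉ I := fun hI h =>
    ha ((mem_powersetCard.mp hI).1 h)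
  rw [Lsum, powersetCard_succ_insert ha, sum_union, sum_image]
  · congr 1
    apply sum_congr rfl
    intro I hI
    have haI := hsub hI
    have hd : insert a X \ insert a I = X \ I := by
      ext j; simp only [Finset.mem_sdiff, Finset.mem_insert]
      constructor
      · rintro ⟨h1, h2⟩; tauto
      · rintro ⟨h1, h2⟩
        refine ⟨Or.inr h1, ?_⟩
        rintro (rfl | h)
        · exact ha h1
        · exact h2 h
    rw [hd, prod_insert haI, prod_insert haI]
  · intro I hI J hJ h
    have := congrArg (fun s => s.erase a) h
    simpa [erase_insert (hsub hI), erase_insert (hsub hJ)] using this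
  · rw [disjoint_left]
    intro I hI hI2
    obtain ⟨J, -, rfl⟩ := mem_image.mp hI2
    exact hsub hI (mem_insert_self _ _)

lemma Lsum_res (τ : ℂ) (f : ℂ → ℂ) (r : ℂ) (hd : ∀ z ∉ lat τ, ContinuousAt f z)
    (hr : Tendsto (fun w => w * f w) (𝓝[≠] 0) (𝓝 r))
    {ι κ : Type*} [DecidableEq ι] [DecidableEq κ] (X : Finset ι) (Y : Finset κ)
    (x : ι → ℂ) (y : κ → ℂ) (k : ℕ) (a : ι) (ha : a ∉ X) (b : κ) (hb : b ∉ Y)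
    (z₀ : ℂ) (hz₀ : y b + z₀ = x a)
    (h : ∀ i ∈ insert a X, ∀ j ∈ insert b Y, (i, j) ≠ (a, b) → y j + z₀ - x i ∉ lat τ) :
    Tendsto (fun z => (z - z₀) * Lsum f (insert a X) (insert b Y) x (fun j => y j + z) (k + 1))
      (𝓝[≠] z₀) (𝓝 (r * ((∏ j ∈ X, f (x a - x j)) * ∏ j ∈ Y, f (y j + z₀ - x a)) *
        Lsum f X Y x (fun j => y j + z₀) k)) := by
  have hcont : ∀ i ∈ insert a X, ∀ j ∈ insert b Y, (i, j) ≠ (a, b) →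
      ContinuousAt (fun z => f (y j + z - x i)) z₀ := by
    intro i hi j hj hij
    have h1 : ContinuousAt f (y j + z₀ - x i) := hd _ (h i hi j hj hij)
    exact ContinuousAt.comp (f := fun z => y j + z - x i) h1 (by fun_prop)
  have hJ : ∀ J ⊆ X, ContinuousAt (fun z => ∏ i ∈ J, ∏ j ∈ insert b Y, f (y j + z - x i)) z₀ := by
    intro J hJ
    apply tendsto_finsetProd
    intro i hi
    apply tendsto_finsetProd
    intro j hj
    refine hcont i (mem_insert_of_mem (hJ hi)) j hj ?_
    rintro ⟨⟩
    exact ha (hJ hi)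
  have hz : Tendsto (fun z => z - z₀) (𝓝[≠] z₀) (𝓝 0) := by
    have : ContinuousAt (fun z => z - z₀) z₀ := by fun_prop
    have h := this.tendsto
    simp only [sub_self] at h
    exact h.mono_left nhdsWithin_le_nhds
  have hpole : Tendsto (fun z => (z - z₀) * f (y b + z - x a)) (𝓝[≠] z₀) (𝓝 r) := by
    have ht : Tendsto (fun z => z - z₀) (𝓝[≠] z₀) (𝓝[≠] 0) := by
      apply tendsto_nhdsWithin_of_tendsto_nhds_of_eventually_within _ hz
      filter_upwards [eventually_mem_nhdsWithin] with t ht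
      simpa [sub_eq_zero] using ht
    refine (hr.comp ht).congr fun z => ?_
    simp only [Function.comp]
    congr 2
    rw [← hz₀]; ring
  simp_rw [Lsum_insert f X (insert b Y) x _ k a ha, mul_add]
  have hfirst : Tendsto (fun z => (z - z₀) * ∑ I ∈ X.powersetCard (k + 1),
      (∏ i ∈ I, ∏ j ∈ insert a X \ I, f (x i - x j)) *
        ∏ i ∈ I, ∏ j ∈ insert b Y, f (y j + z - x i)) (𝓝[≠] z₀) (𝓝 0) := by
    have : ContinuousAt (fun z => ∑ I ∈ X.powersetCard (k + 1),
      (∏ i ∈ I, ∏ j ∈ insert a X \ I, f (x i - x j)) *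
        ∏ i ∈ I, ∏ j ∈ insert b Y, f (y j + z - x i)) z₀ := by
      apply tendsto_finsetSum
      intro I hI
      exact (hJ I (mem_powersetCard.mp hI).1).tendsto.const_mul _
    have h2 := hz.mul (this.tendsto.mono_left (nhdsWithin_le_nhds (s := {z₀}ᶜ)))
    rwa [zero_mul] at h2
  rw [← zero_add (r * _ * _)]
  refine hfirst.add ?_
  simp_rw [Lsum, mul_sum]
  apply tendsto_finsetSum
  intro I hI
  have hIX := (mem_powersetCard.mp hI).1
  have t1 := ((hJ I hIX).tendsto.mono_left (nhdsWithin_le_nhds (s := {z₀}ᶜ)))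
  have t2 : Tendsto (fun z => ∏ j ∈ Y, f (y j + z - x a)) (𝓝[≠] z₀)
      (𝓝 (∏ j ∈ Y, f (y j + z₀ - x a))) := by
    apply tendsto_finsetProd
    intro j hj
    refine (hcont a (mem_insert_self _ _) j (mem_insert_of_mem hj) ?_).tendsto.mono_left
      nhdsWithin_le_nhds
    rintro ⟨⟩
    exact hb hj
  have t := ((hpole.mul t2).mul t1).const_mul
    ((∏ j ∈ X \ I, f (x a - x j)) * (∏ i ∈ I, ∏ j ∈ X \ I, f (x i - x j)))
  have key2 : ∏ i ∈ I, ∏ j ∈ insert b Y, f (y j + z₀ - x i) =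
      (∏ i ∈ I, f (x a - x i)) * ∏ i ∈ I, ∏ j ∈ Y, f (y j + z₀ - x i) := by
    rw [← prod_mul_distrib]
    refine prod_congr rfl fun i _ => ?_
    rw [prod_insert hb, hz₀]
  have key3 : ∏ j ∈ X, f (x a - x j) = (∏ j ∈ X \ I, f (x a - x j)) * ∏ j ∈ I, f (x a - x j) :=
    (prod_sdiff hIX).symm
  rw [key2] at t
  rw [key3]
  convert t using 1
  · funext z
    rw [prod_insert hb]
    ring
  · congr 1
    ring

lemma Lsum_shift1 (f : ℂ → ℂ) (hf1 : ∀ z, f (z + 1) = f z)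
    {ι κ : Type*} [DecidableEq ι] (X : Finset ι) (Y : Finset κ)
    (x : ι → ℂ) (y : κ → ℂ) (k : ℕ) (z : ℂ) :
    Lsum f X Y x (fun j => y j + (z + 1)) k = Lsum f X Y x (fun j => y j + z) k := by
  simp only [Lsum]
  refine sum_congr rfl fun I _ => ?_
  congr 1
  refine prod_congr rfl fun i _ => prod_congr rfl fun j _ => ?_
  rw [← hf1 (y j + z - x i)]
  congr 1; ring

lemma Lsum_shift2 (τ μ : ℂ) (f : ℂ → ℂ) (hf2 : ∀ z, f (z + τ) = μ * f z)
    {ι κ : Type*} [DecidableEq ι] (X : Finset ι) (Y : Finset κ)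
    (x : ι → ℂ) (y : κ → ℂ) (k : ℕ) (z : ℂ) :
    Lsum f X Y x (fun j => y j + (z + τ)) k =
      μ ^ (Y.card * k) * Lsum f X Y x (fun j => y j + z) k := by
  simp only [Lsum]
  rw [mul_sum]
  refine sum_congr rfl fun I hI => ?_
  have : ∏ i ∈ I, ∏ j ∈ Y, f (y j + (z + τ) - x i) =
      μ ^ (Y.card * k) * ∏ i ∈ I, ∏ j ∈ Y, f (y j + z - x i) := by
    have : ∀ i ∈ I, ∏ j ∈ Y, f (y j + (z + τ) - x i) = μ ^ Y.card * ∏ j ∈ Y, f (y j + z - x i) := by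
      intro i _
      rw [← prod_const, ← prod_mul_distrib]
      refine prod_congr rfl fun j _ => ?_
      rw [← hf2]; congr 1; ring
    rw [prod_congr rfl this, prod_mul_distrib, prod_const, (mem_powersetCard.mp hI).2, ← pow_mul]
  rw [this]; ring

lemma Lsum_diff (τ : ℂ) (f : ℂ → ℂ) (hd : ∀ z ∉ lat τ, DifferentiableAt ℂ f z)
    {ι κ : Type*} [DecidableEq ι] (X : Finset ι) (Y : Finset κ)
    (x : ι → ℂ) (y : κ → ℂ) (k : ℕ) (z : ℂ) (h : ∀ i ∈ X, ∀ j ∈ Y, y j + z - x i ∉ lat τ) :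
    DifferentiableAt ℂ (fun z => Lsum f X Y x (fun j => y j + z) k) z := by
  simp only [Lsum]
  apply DifferentiableAt.fun_sum
  intro I hI
  apply DifferentiableAt.const_mul
  apply DifferentiableAt.fun_finsetProd
  intro i hi
  apply DifferentiableAt.fun_finsetProd
  intro j hj
  have h1 := hd _ (h i ((mem_powersetCard.mp hI).1 hi) j hj)
  exact DifferentiableAt.comp (f := fun z => y j + z - x i) z h1 (by fun_prop)

lemma lat_shift (τ : ℂ) (hτ : 0 < τ.im) (z c : ℂ) : ∀ᶠ w in 𝓝[≠] z, w + c ∉ lat τ := by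
  have ht : Tendsto (fun w : ℂ => w + c) (𝓝[≠] z) (𝓝[≠] (z + c)) := by
    apply tendsto_nhdsWithin_of_tendsto_nhds_of_eventually_within
    · have : ContinuousAt (fun t : ℂ => t + c) z := by fun_prop
      exact this.tendsto.mono_left nhdsWithin_le_nhds
    · filter_upwards [eventually_mem_nhdsWithin] with t ht
      simpa using ht
  exact ht.eventually (lat_disc τ hτ (z + c))

theorem abs_id (τ : ℂ) (hτ : 0 < τ.im) (f : ℂ → ℂ) (μ r : ℂ) (M : ℕ) (hμ0 : μ ≠ 0)
    (hf1 : ∀ z, f (z + 1) = f z) (hf2 : ∀ z, f (z + τ) = μ * f z)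
    (hd : ∀ z ∉ lat τ, DifferentiableAt ℂ f z)
    (hr : Tendsto (fun w => w * f w) (𝓝[≠] 0) (𝓝 r))
    (hμ : ∀ m, 1 ≤ m → m ≤ M → ∀ n : ℤ, μ ^ m ≠ cexp (2 * Real.pi * I * (n * τ)))
    {ι κ : Type*} [DecidableEq ι] [DecidableEq κ] (x : ι → ℂ) (y : κ → ℂ) (n : ℕ) :
    ∀ (X : Finset ι) (Y : Finset κ) (k : ℕ), X.card = n → Y.card = n → n * k ≤ M →
      (∀ i ∈ X, ∀ i' ∈ X, ∀ j ∈ Y, ∀ j' ∈ Y, (i, j) ≠ (i', j') →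
        (y j - x i) - (y j' - x i') ∉ lat τ) →
      ∀ z, (∀ i ∈ X, ∀ j ∈ Y, y j + z - x i ∉ lat τ) →
      Lsum f X Y x (fun j => y j + z) k =
        Lsum f Y X (fun j => -y j) (fun i => -x i + z) k := by
  induction n with
  | zero =>
    intro X Y k hX hY _ _ z _
    rw [card_eq_zero] at hX hY
    subst hX hY
    cases k <;> simp [Lsum]
  | succ n ih =>
    intro X Y k hX hY hM hgen z hz
    cases k with
    | zero => simp [Lsum]
    | succ k =>
    set S : Set ℂ := {z | ∃ i ∈ X, ∃ j ∈ Y, y j + z - x i ∈ lat τ} with hSdef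
    have hSn : ∀ z, z ∉ S ↔ ∀ i ∈ X, ∀ j ∈ Y, y j + z - x i ∉ lat τ := by
      intro z; simp [hSdef]
    have hS : ∀ z, ∀ᶠ w in 𝓝[≠] z, w ∉ S := by
      intro z
      simp_rw [hSn]
      rw [eventually_all_finset]
      intro i _
      rw [eventually_all_finset]
      intro j _
      filter_upwards [lat_shift τ hτ z (y j - x i)] with w hw
      rwa [show y j + w - x i = w + (y j - x i) by ring]
    have l1 : (1:ℂ) ∈ lat τ := ⟨1, 0, by simp⟩
    have lτ : τ ∈ lat τ := ⟨0, 1, by simp⟩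
    have hSl : ∀ l ∈ lat τ, ∀ z ∉ S, z + l ∉ S := by
      intro l hl z hz
      rw [hSn] at hz ⊢
      intro i hi j hj hc
      apply hz i hi j hj
      have := lat_sub hc hl
      rwa [show y j + (z + l) - x i - l = y j + z - x i by ring] at this
    set F : ℂ → ℂ := fun z => Lsum f X Y x (fun j => y j + z) (k + 1) -
      Lsum f Y X (fun j => -y j) (fun i => -x i + z) (k + 1) with hF
    have hF1 : ∀ z, F (z + 1) = F z := by
      intro z
      simp only [hF]
      rw [Lsum_shift1 f hf1, Lsum_shift1 f hf1 Y X _ (fun i => -x i)]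
    have hF2 : ∀ z, F (z + τ) = μ ^ ((n + 1) * (k + 1)) * F z := by
      intro z
      simp only [hF]
      rw [Lsum_shift2 τ μ f hf2, Lsum_shift2 τ μ f hf2 Y X _ (fun i => -x i), hX, hY]
      ring
    have hres := key0 τ hτ F S hS (hSl 1 l1) (hSl τ lτ) ?_ ?_ (μ ^ ((n + 1) * (k + 1)))
      (pow_ne_zero _ hμ0) (hμ _ (Nat.mul_pos (Nat.succ_pos _) (Nat.succ_pos _)) hM) hF1 hF2
      z ((hSn z).2 hz)
    · exact sub_eq_zero.mp hres
    · intro z hz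
      rw [hSn] at hz
      refine (Lsum_diff τ f hd X Y x y (k + 1) z hz).sub
        (Lsum_diff τ f hd Y X (fun j => -y j) (fun i => -x i) (k + 1) z ?_)
      intro j hj i hi
      rw [show -x i + z - -y j = y j + z - x i by ring]
      exact hz i hi j hj
    · rintro p ⟨a, ha, b, hb, hl⟩
      set l := y b + p - x a with hldef
      have hsh := pole_shift τ F 1 (μ ^ ((n + 1) * (k + 1))) one_ne_zero (pow_ne_zero _ hμ0)
        (by simpa using hF1) hF2 (p - l) l hl
      rw [sub_add_cancel] at hsh
      apply hsh
      set z₀ := p - l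
      have hz₀ : y b + z₀ = x a := by simp only [z₀, hldef]; ring
      have hgen' : ∀ i ∈ X, ∀ j ∈ Y, (i, j) ≠ (a, b) → y j + z₀ - x i ∉ lat τ := by
        intro i hi j hj hij
        have := hgen i hi a ha j hj b hb hij
        rwa [show y j - x i - (y b - x a) = y j + z₀ - x i by rw [← hz₀]; ring] at this
      have hXe : insert a (X.erase a) = X := insert_erase ha
      have hYe : insert b (Y.erase b) = Y := insert_erase hb
      have r1 := Lsum_res τ f r (fun z hz => (hd z hz).continuousAt) hr (X.erase a) (Y.erase b)
        x y k a (notMem_erase _ _) b (notMem_erase _ _) z₀ hz₀ (by rwa [hXe, hYe])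
      have r2 := Lsum_res τ f r (fun z hz => (hd z hz).continuousAt) hr (Y.erase b) (X.erase a)
        (fun j => -y j) (fun i => -x i) k b (notMem_erase _ _) a (notMem_erase _ _) z₀
        (by rw [← hz₀]; ring) (by
          rw [hXe, hYe]
          intro j hj i hi hij
          rw [show -x i + z₀ - -y j = y j + z₀ - x i by ring]
          apply hgen' i hi j hj
          rintro ⟨⟩
          exact hij rfl)
      rw [hXe, hYe] at r1 r2
      have r3 := r1.sub r2
      have hI := ih (X.erase a) (Y.erase b) k (by rw [card_erase_of_mem ha, hX]; rfl)
        (by rw [card_erase_of_mem hb, hY]; rfl) (le_trans (by nlinarith) hM)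
        (fun i hi i' hi' j hj j' hj' => hgen i (mem_of_mem_erase hi) i' (mem_of_mem_erase hi')
          j (mem_of_mem_erase hj) j' (mem_of_mem_erase hj')) z₀
        (fun i hi j hj => hgen' i (mem_of_mem_erase hi) j (mem_of_mem_erase hj) (by
          rintro ⟨⟩
          exact notMem_erase _ _ hi))
      have hlim : r * ((∏ j ∈ X.erase a, f (x a - x j)) * ∏ j ∈ Y.erase b, f (y j + z₀ - x a)) *
          Lsum f (X.erase a) (Y.erase b) x (fun j => y j + z₀) k -
          r * ((∏ j ∈ Y.erase b, f (-y b - -y j)) * ∏ j ∈ X.erase a, f (-x j + z₀ - -y b)) *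
          Lsum f (Y.erase b) (X.erase a) (fun j => -y j) (fun i => -x i + z₀) k = 0 := by
        rw [hI]
        have e1 : ∏ j ∈ Y.erase b, f (-y b - -y j) = ∏ j ∈ Y.erase b, f (y j + z₀ - x a) := by
          refine prod_congr rfl fun j _ => ?_
          congr 1; rw [← hz₀]; ring
        have e2 : ∏ j ∈ X.erase a, f (-x j + z₀ - -y b) = ∏ j ∈ X.erase a, f (x a - x j) := by
          refine prod_congr rfl fun j _ => ?_
          congr 1; rw [← hz₀]; ring
        rw [e1, e2]; ring
      rw [hlim] at r3
      refine r3.congr fun z => ?_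
      simp only [hF]
      ring

/-- the `q`-Pochhammer symbol -/
def qp (q u : ℂ) : ℂ := ∏' n : ℕ, (1 + -(q ^ n * u))

lemma qp_summable (q u : ℂ) (hq : ‖q‖ < 1) : Summable fun n : ℕ => ‖-(q ^ n * u)‖ := by
  simp only [norm_neg, norm_mul, norm_pow]
  exact (summable_geometric_of_lt_one (norm_nonneg _) hq).mul_right _

lemma qp_rec (q u : ℂ) (hq : ‖q‖ < 1) : qp q u = (1 - u) * qp q (q * u) := by
  have hm := multipliable_one_add_of_summable (qp_summable q (q * u) hq)
  have := tprod_eq_zero_mul' (f := fun n : ℕ => 1 + -(q ^ n * u)) (by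
    refine hm.congr fun n => ?_
    ring)
  rw [qp, this, qp]
  congr 1
  · ring
  · refine tprod_congr fun n => ?_
    ring

lemma qp_ne (q u : ℂ) (hq : ‖q‖ < 1) (h : ∀ n : ℕ, q ^ n * u ≠ 1) : qp q u ≠ 0 := by
  apply tprod_one_add_ne_zero_of_summable _ (qp_summable q u hq)
  intro n hn
  apply h n
  linear_combination -hn

lemma qp_diff (q : ℂ) (hq : ‖q‖ < 1) : Differentiable ℂ (qp q) := by
  intro u
  have hu : Metric.ball (0:ℂ) (‖u‖ + 1) ∈ 𝓝 u := Metric.isOpen_ball.mem_nhds (by simp)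
  have hP := Summable.hasProdLocallyUniformlyOn_nat_one_add (R := ℂ) (α := ℂ)
    (f := fun n u => -(q ^ n * u)) (K := Metric.ball (0:ℂ) (‖u‖ + 1)) Metric.isOpen_ball
    (u := fun n => ‖q‖ ^ n * (‖u‖ + 1))
    ((summable_geometric_of_lt_one (norm_nonneg _) hq).mul_right _)
    (.of_forall fun n w hw => by
      rw [norm_neg, norm_mul, norm_pow]
      have : ‖w‖ < ‖u‖ + 1 := by simpa using hw
      gcongr)
    (fun n => by fun_prop)
  exact (hP.differentiableOn (.of_forall fun _ => by
    simpa [Finset.prod_fn] using DifferentiableOn.finsetProd (fun _ _ => by fun_prop))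
    Metric.isOpen_ball).differentiableAt hu

lemma theta_eq (τ z : ℂ) : theta τ z =
    -(cexp (Real.pi * I * τ / 4 + Real.pi * I * (z + 1/2)) *
      jacobiTheta₂ (z + 1/2 + τ/2) τ) := by
  rw [theta, jacobiTheta₂, ← tsum_mul_left]
  congr 1
  refine tsum_congr fun k => ?_
  rw [jacobiTheta₂_term, ← Complex.exp_add]
  congr 1
  ring

lemma theta_diff (τ : ℂ) (hτ : 0 < τ.im) : Differentiable ℂ (theta τ) := by
  have : theta τ = fun z => -(cexp (Real.pi * I * τ / 4 + Real.pi * I * (z + 1/2)) *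
      jacobiTheta₂ (z + 1/2 + τ/2) τ) := funext (theta_eq τ)
  rw [this]
  intro z
  have h : DifferentiableAt ℂ (fun z => jacobiTheta₂ (z + 1/2 + τ/2) τ) z :=
    DifferentiableAt.comp (g := fun w => jacobiTheta₂ w τ) (f := fun z => z + 1/2 + τ/2) z
      (differentiableAt_jacobiTheta₂_fst _ hτ) (by fun_prop)
  fun_prop

lemma theta_add_one (τ z : ℂ) : theta τ (z + 1) = - theta τ z := by
  rw [theta_eq, theta_eq, show z + 1 + 1/2 + τ/2 = z + 1/2 + τ/2 + 1 by ring,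
    jacobiTheta₂_add_left,
    show (Real.pi * I * τ / 4 + Real.pi * I * (z + 1 + 1/2) : ℂ) =
      Real.pi * I * τ / 4 + Real.pi * I * (z + 1/2) + Real.pi * I by ring,
    Complex.exp_add _ (Real.pi * I), Complex.exp_pi_mul_I]
  ring

lemma theta_add_tau (τ z : ℂ) : theta τ (z + τ) =
    -cexp (-(Real.pi * I * τ) - 2 * Real.pi * I * z) * theta τ z := by
  rw [theta_eq, theta_eq, show z + τ + 1/2 + τ/2 = z + 1/2 + τ/2 + τ by ring,
    jacobiTheta₂_add_left']
  have : cexp (Real.pi * I * τ / 4 + Real.pi * I * (z + τ + 1/2)) *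
      cexp (-Real.pi * I * (τ + 2 * (z + 1/2 + τ/2))) =
      - (cexp (-(Real.pi * I * τ) - 2 * Real.pi * I * z) *
        cexp (Real.pi * I * τ / 4 + Real.pi * I * (z + 1/2))) := by
    rw [← Complex.exp_add, ← Complex.exp_add]
    have hneg : ∀ w : ℂ, -cexp w = cexp (w - Real.pi * I) := by
      intro w
      rw [Complex.exp_sub, Complex.exp_pi_mul_I, div_neg, div_one]
    rw [hneg]
    congr 1
    ring
  linear_combination (-jacobiTheta₂ (z + 1/2 + τ/2) τ) * this

lemma theta_zero (τ : ℂ) : theta τ 0 = 0 := by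
  rw [theta_eq]
  have h1 := jacobiTheta₂_add_left (-(1/2 + τ/2)) τ
  have h2 := jacobiTheta₂_add_left' (-(1/2 + τ/2) + 1) τ
  rw [show -(1/2 + τ/2) + 1 + τ = 1/2 + τ/2 by ring, h1, jacobiTheta₂_neg_left,
    show -Real.pi * I * (τ + 2 * (-(1/2 + τ/2) + 1)) = -(Real.pi * I) by ring,
    Complex.exp_neg, Complex.exp_pi_mul_I] at h2
  have : jacobiTheta₂ (1/2 + τ/2) τ = 0 := by
    norm_num at h2 ⊢
    linear_combination h2 / 2
  simp only [zero_add, this, mul_zero, neg_zero]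

/-- product side -/
def PP (τ z : ℂ) : ℂ := qp (cexp (2 * Real.pi * I * τ)) (cexp (2 * Real.pi * I * z)) *
  qp (cexp (2 * Real.pi * I * τ)) (cexp (2 * Real.pi * I * (τ - z)))

lemma q_lt (τ : ℂ) (hτ : 0 < τ.im) : ‖cexp (2 * Real.pi * I * τ)‖ < 1 := by
  rw [Complex.norm_exp]
  rw [← Real.exp_zero]
  apply Real.exp_lt_exp.2
  have : (2 * Real.pi * I * τ : ℂ).re = -(2 * Real.pi * τ.im) := by simp
  rw [this]
  have := Real.pi_pos
  have : 0 < 2 * Real.pi * τ.im := by positivity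
  linarith

lemma PP_diff (τ : ℂ) (hτ : 0 < τ.im) : Differentiable ℂ (PP τ) := by
  have h := qp_diff _ (q_lt τ hτ)
  unfold PP
  fun_prop

lemma PP_add_one (τ z : ℂ) : PP τ (z + 1) = PP τ z := by
  unfold PP
  have e1 : cexp (2 * Real.pi * I * (z + 1)) = cexp (2 * Real.pi * I * z) := by
    rw [mul_add, mul_one, Complex.exp_add, Complex.exp_two_pi_mul_I, mul_one]
  have e2 : cexp (2 * Real.pi * I * (τ - (z + 1))) = cexp (2 * Real.pi * I * (τ - z)) := by
    rw [show 2 * Real.pi * I * (τ - (z + 1)) = 2 * Real.pi * I * (τ - z) - 2 * Real.pi * I by ring,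
      Complex.exp_sub, Complex.exp_two_pi_mul_I, div_one]
  rw [e1, e2]

lemma PP_factor (τ : ℂ) (hτ : 0 < τ.im) (z : ℂ) : PP τ z = (1 - cexp (2 * Real.pi * I * z)) *
    (qp (cexp (2 * Real.pi * I * τ)) (cexp (2 * Real.pi * I * (τ + z))) *
     qp (cexp (2 * Real.pi * I * τ)) (cexp (2 * Real.pi * I * (τ - z)))) := by
  unfold PP
  rw [qp_rec _ (cexp (2 * Real.pi * I * z)) (q_lt τ hτ), ← Complex.exp_add, ← mul_add]
  ring

lemma PP_add_tau (τ : ℂ) (hτ : 0 < τ.im) (z : ℂ) :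
    PP τ (z + τ) = -cexp (-(2 * Real.pi * I * z)) * PP τ z := by
  rw [PP_factor τ hτ z, PP]
  rw [show τ - (z + τ) = -z by ring, qp_rec _ (cexp (2 * Real.pi * I * -z)) (q_lt τ hτ),
    ← Complex.exp_add, ← mul_add, ← sub_eq_add_neg, add_comm z τ, mul_neg]
  have : cexp (-(2 * Real.pi * I * z)) * cexp (2 * Real.pi * I * z) = 1 := by
    rw [← Complex.exp_add]; simp
  linear_combination (-(qp (cexp (2 * Real.pi * I * τ)) (cexp (2 * Real.pi * I * (τ + z))) *
     qp (cexp (2 * Real.pi * I * τ)) (cexp (2 * Real.pi * I * (τ - z))))) * this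

lemma exp_lat (τ w : ℂ) (n : ℕ) (h : cexp (2 * Real.pi * I * τ) ^ n * cexp (2 * Real.pi * I * w) = 1) :
    ∃ m : ℤ, w = m - n * τ := by
  rw [← Complex.exp_nat_mul, ← Complex.exp_add, Complex.exp_eq_one_iff] at h
  obtain ⟨m, hm⟩ := h
  refine ⟨m, ?_⟩
  have hpi : (2 * Real.pi * I : ℂ) ≠ 0 := by simp [Real.pi_ne_zero]
  apply mul_left_cancel₀ hpi
  linear_combination hm

lemma PP_ne (τ : ℂ) (hτ : 0 < τ.im) (z : ℂ) (hz : z ∉ lat τ) : PP τ z ≠ 0 := by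
  apply mul_ne_zero
  · apply qp_ne _ _ (q_lt τ hτ)
    intro n h
    obtain ⟨m, hm⟩ := exp_lat _ _ _ h
    exact hz ⟨m, -n, by rw [hm]; push_cast; ring⟩
  · apply qp_ne _ _ (q_lt τ hτ)
    intro n h
    obtain ⟨m, hm⟩ := exp_lat _ _ _ h
    exact hz ⟨-m, n + 1, by push_cast; linear_combination -hm⟩

lemma theta_ne (τ : ℂ) (hτ : 0 < τ.im) (h0 : deriv (theta τ) 0 ≠ 0) (z : ℂ) (hz : z ∉ lat τ) :
    theta τ z ≠ 0 := by
  set F : ℂ → ℂ := fun z => theta τ z * cexp (Real.pi * I * z) / PP τ z with hF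
  have hF1 : ∀ z, F (z + 1) = 1 * F z := by
    intro z
    simp only [hF]
    rw [theta_add_one, PP_add_one, mul_add, mul_one, Complex.exp_add, Complex.exp_pi_mul_I]
    ring
  have hF2 : ∀ z, F (z + τ) = 1 * F z := by
    intro z
    simp only [hF]
    rw [theta_add_tau, PP_add_tau τ hτ]
    have e : -cexp (-(Real.pi * I * τ) - 2 * Real.pi * I * z) * theta τ z *
        cexp (Real.pi * I * (z + τ)) = -cexp (-(2 * Real.pi * I * z)) *
          (theta τ z * cexp (Real.pi * I * z)) := by
      have : cexp (-(Real.pi * I * τ) - 2 * Real.pi * I * z) * cexp (Real.pi * I * (z + τ)) =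
          cexp (-(2 * Real.pi * I * z)) * cexp (Real.pi * I * z) := by
        rw [← Complex.exp_add, ← Complex.exp_add]
        congr 1
        ring
      linear_combination (-theta τ z) * this
    rw [e, mul_div_mul_left _ _ (neg_ne_zero.mpr (Complex.exp_ne_zero _)), one_mul]
  have hdθ := theta_diff τ hτ
  have hdP := PP_diff τ hτ
  have hp0 : Tendsto (fun z => (z - 0) * F z) (𝓝[≠] 0) (𝓝 0) := by
    have hder : HasDerivAt (fun z : ℂ => 1 - cexp (2 * Real.pi * I * z)) (-(2 * Real.pi * I)) 0 := by
      have h1 : HasDerivAt (fun z : ℂ => 2 * Real.pi * I * z) (2 * Real.pi * I) 0 := by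
        simpa using (hasDerivAt_id (0:ℂ)).const_mul (2 * Real.pi * I : ℂ)
      have := h1.cexp.const_sub 1
      simpa using this
    have hpi : (2 * Real.pi * I : ℂ) ≠ 0 := by simp [Real.pi_ne_zero]
    have hsl := hder.tendsto_slope.inv₀ (neg_ne_zero.mpr hpi)
    set Q : ℂ → ℂ := fun z =>
      qp (cexp (2 * Real.pi * I * τ)) (cexp (2 * Real.pi * I * (τ + z))) *
      qp (cexp (2 * Real.pi * I * τ)) (cexp (2 * Real.pi * I * (τ - z))) with hQ
    have hQ0 : Q 0 ≠ 0 := by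
      have : ∀ n : ℕ, cexp (2 * Real.pi * I * τ) ^ n * cexp (2 * Real.pi * I * τ) ≠ 1 := by
        intro n h
        rw [← pow_succ] at h
        have h2 := congrArg norm h
        rw [norm_pow, norm_one] at h2
        exact (pow_lt_one₀ (norm_nonneg _) (q_lt τ hτ) (Nat.succ_ne_zero n)).ne h2
      simp only [hQ, add_zero, sub_zero]
      exact mul_ne_zero (qp_ne _ _ (q_lt τ hτ) this) (qp_ne _ _ (q_lt τ hτ) this)
    have hQc : ContinuousAt Q 0 := by
      have h := qp_diff _ (q_lt τ hτ)
      have : Differentiable ℂ Q := by simp only [hQ]; fun_prop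
      exact this.continuous.continuousAt
    have hnum : ContinuousAt (fun z => theta τ z * cexp (Real.pi * I * z) / Q z) 0 := by
      refine ContinuousAt.div ?_ hQc hQ0
      have := hdθ.continuous
      fun_prop
    have h3 := hsl.mul (hnum.tendsto.mono_left (nhdsWithin_le_nhds (s := {0}ᶜ)))
    simp only [theta_zero, zero_mul, zero_div, mul_zero] at h3
    refine h3.congr fun z => ?_
    simp only [hF]
    rw [PP_factor τ hτ z]
    simp only [slope_def_field, mul_zero, Complex.exp_zero, sub_self, sub_zero, hQ]
    rw [inv_div, div_mul_div_comm, mul_div_assoc]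
  obtain ⟨C, hC⟩ := key τ hτ F (lat τ) (lat_disc τ hτ)
    (fun z hz => by
      have h1 := hdθ z
      have h2 := hdP z
      have h3 := PP_ne τ hτ z hz
      simp only [hF]
      refine DifferentiableAt.div ?_ h2 h3
      fun_prop)
    (fun p hp => by
      simpa using pole_shift τ F 1 1 one_ne_zero one_ne_zero hF1 hF2 0 p hp hp0)
    1 1 norm_one norm_one hF1 hF2
  have hC0 : C ≠ 0 := by
    rintro rfl
    apply h0
    have hev : theta τ =ᶠ[𝓝 0] fun _ => 0 := by
      have := lat_disc τ hτ 0
      rw [eventually_nhdsWithin_iff] at this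
      filter_upwards [this] with w hw
      by_cases hw0 : w = 0
      · rw [hw0, theta_zero]
      · have := hC w (hw hw0)
        simp only [hF, div_eq_zero_iff, mul_eq_zero, Complex.exp_ne_zero, or_false] at this
        exact this.resolve_right (PP_ne τ hτ w (hw hw0))
    rw [hev.deriv_eq]
    simp
  intro h
  apply hC0
  rw [← hC z hz]
  simp [hF, h]

lemma phi_add_one (τ h z : ℂ) : phi τ h (z + 1) = phi τ h z := by
  unfold phi
  rw [← add_assoc, theta_add_one, theta_add_one, mul_neg, mul_neg, neg_div_neg_eq]

lemma phi_add_tau (τ h z : ℂ) :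
    phi τ h (z + τ) = cexp (-(2 * Real.pi * I * h)) * phi τ h z := by
  unfold phi
  rw [← add_assoc, theta_add_tau, theta_add_tau]
  have : cexp (-(Real.pi * I * τ) - 2 * Real.pi * I * (h + z)) =
      cexp (-(Real.pi * I * τ) - 2 * Real.pi * I * z) * cexp (-(2 * Real.pi * I * h)) := by
    rw [← Complex.exp_add]; congr 1; ring
  rw [this]
  have h0 : -cexp (-(Real.pi * I * τ) - 2 * Real.pi * I * z) ≠ 0 :=
    neg_ne_zero.mpr (Complex.exp_ne_zero _)
  set A := cexp (-(Real.pi * I * τ) - 2 * Real.pi * I * z)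
  rw [show deriv (theta τ) 0 * (-(A * cexp (-(2 * Real.pi * I * h))) * theta τ (h + z)) =
    -A * (cexp (-(2 * Real.pi * I * h)) * (deriv (theta τ) 0 * theta τ (h + z))) by ring,
    show theta τ h * (-A * theta τ z) = -A * (theta τ h * theta τ z) by ring,
    mul_div_mul_left _ _ h0, mul_div_assoc]

lemma phi_generic (τ h : ℂ) (hτ : 0 < τ.im) (h0 : deriv (theta τ) 0 ≠ 0) (M : ℕ)
    (hh : h ∉ lat τ) (hM : ∀ m : ℕ, 1 ≤ m → m ≤ M → (m : ℂ) * h ∉ lat τ)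
    {ι : Type*} [Fintype ι] [DecidableEq ι] (x y : ι → ℂ) (k : ℕ) (hk : Fintype.card ι * k ≤ M)
    (hgen : ∀ i i' j j', (i, j) ≠ (i', j') → (y j - x i) - (y j' - x i') ∉ lat τ)
    (hyx : ∀ i j, y j - x i ∉ lat τ) :
    Lsum (phi τ h) univ univ x y k =
      Lsum (phi τ h) univ univ (fun i => -y i) (fun i => -x i) k := by
  have hθ := theta_ne τ hτ h0
  have hdθ := theta_diff τ hτ
  have hres : Tendsto (fun w => w * phi τ h w) (𝓝[≠] 0)
      (𝓝 ((deriv (theta τ) 0)⁻¹ * (deriv (theta τ) 0 * theta τ (h + 0) / theta τ h))) := by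
    have hsl := (hdθ 0).hasDerivAt.tendsto_slope.inv₀ h0
    have hc : ContinuousAt (fun w => deriv (theta τ) 0 * theta τ (h + w) / theta τ h) 0 := by
      have := hdθ.continuous
      fun_prop
    have h3 := hsl.mul (hc.tendsto.mono_left (nhdsWithin_le_nhds (s := {0}ᶜ)))
    refine h3.congr fun z => ?_
    simp only [slope_def_field, theta_zero, sub_zero, phi]
    rw [inv_div, div_mul_div_comm, mul_div_assoc, mul_comm (theta τ z)]
  have := abs_id τ hτ (phi τ h) (cexp (-(2 * Real.pi * I * h))) _ M (Complex.exp_ne_zero _)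
    (phi_add_one τ h) (phi_add_tau τ h)
    (fun z hz => by
      unfold phi
      have h1 := hθ z hz
      have h2 := hθ h hh
      refine DifferentiableAt.div (by fun_prop) (by fun_prop) (mul_ne_zero h2 h1))
    hres
    (fun m hm1 hm2 n hn => by
      apply hM m hm1 hm2
      rw [← Complex.exp_nat_mul, Complex.exp_eq_exp_iff_exists_int] at hn
      obtain ⟨j, hj⟩ := hn
      refine ⟨-j, -n, ?_⟩
      have hpi : (2 * Real.pi * I : ℂ) ≠ 0 := by simp [Real.pi_ne_zero]
      apply mul_left_cancel₀ hpi
      push_cast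
      linear_combination -hj)
    x y (Fintype.card ι) univ univ k rfl rfl hk
    (fun i _ i' _ j _ j' _ => hgen i i' j j') 0 (fun i _ j _ => by simpa using hyx i j)
  simpa using this

lemma phi_cont (τ h : ℂ) (hτ : 0 < τ.im) (h0 : deriv (theta τ) 0 ≠ 0) (hh : h ∉ lat τ)
    (g : ℂ → ℂ) (hg : ContinuousAt g 0) (hg0 : g 0 ∉ lat τ) :
    ContinuousAt (fun t => phi τ (h + t) (g t)) 0 := by
  have hc := (theta_diff τ hτ).continuous
  unfold phi
  refine ContinuousAt.div (by fun_prop) (by fun_prop) (mul_ne_zero ?_ (theta_ne τ hτ h0 _ hg0))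
  rw [add_zero]
  exact theta_ne τ hτ h0 _ hh

lemma Lsum_cont (τ h : ℂ) (hτ : 0 < τ.im) (h0 : deriv (theta τ) 0 ≠ 0) (hh : h ∉ lat τ)
    {ι : Type*} [Fintype ι] [DecidableEq ι] (x y : ℂ → ι → ℂ) (k : ℕ)
    (hx : ∀ i, Continuous fun t => x t i) (hy : ∀ i, Continuous fun t => y t i)
    (hxx : ∀ i j, i ≠ j → x 0 i - x 0 j ∉ lat τ) (hyx : ∀ i j, y 0 j - x 0 i ∉ lat τ) :
    ContinuousAt (fun t => Lsum (phi τ (h + t)) univ univ (x t) (y t) k) 0 := by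
  unfold Lsum
  apply tendsto_finsetSum
  intro I _
  refine Tendsto.mul ?_ ?_
  · apply tendsto_finsetProd
    intro i hi
    apply tendsto_finsetProd
    intro j hj
    refine phi_cont τ h hτ h0 hh (fun t => x t i - x t j) ((hx i).sub (hx j)).continuousAt
      (hxx i j ?_)
    rintro rfl
    exact (Finset.mem_sdiff.mp hj).2 hi
  · apply tendsto_finsetProd
    intro i hi
    apply tendsto_finsetProd
    intro j hj
    exact phi_cont τ h hτ h0 hh (fun t => y t j - x t i) ((hy j).sub (hx i)).continuousAt
      (hyx i j)

lemma phi_id (τ ℏ : ℂ) (hτ : 0 < τ.im) (h0 : deriv (theta τ) 0 ≠ 0) (hℏ : ℏ ∉ lat τ)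
    (N k : ℕ) (x y : Fin N → ℂ)
    (hxx : ∀ i j : Fin N, i ≠ j → x i - x j ∉ lat τ)
    (hyy : ∀ i j : Fin N, i ≠ j → y i - y j ∉ lat τ)
    (hyx : ∀ i j : Fin N, y i - x j ∉ lat τ) :
    Lsum (phi τ ℏ) univ univ x y k =
      Lsum (phi τ ℏ) univ univ (fun i => -y i) (fun i => -x i) k := by
  set xt : ℂ → Fin N → ℂ := fun t i => x i - t * (N * (i : ℕ) : ℂ) with hxt
  set yt : ℂ → Fin N → ℂ := fun t j => y j + t * (1 + (j : ℕ) : ℂ) with hyt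
  have c1 := Lsum_cont τ ℏ hτ h0 hℏ xt yt k (fun i => by simp only [hxt]; fun_prop)
    (fun i => by simp only [hyt]; fun_prop) (fun i j hij => by simpa [hxt] using hxx i j hij)
    (fun i j => by simpa [hxt, hyt] using hyx j i)
  have c2 := Lsum_cont τ ℏ hτ h0 hℏ (fun t i => -yt t i) (fun t i => -xt t i) k
    (fun i => by simp only [hyt]; fun_prop)
    (fun i => by simp only [hxt]; fun_prop)
    (fun i j hij => by
      have := hyy j i hij.symm
      simp only [hyt, zero_mul, add_zero]
      rwa [show -y i - -y j = y j - y i by ring])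
    (fun i j => by
      have := hyx i j
      simp only [hyt, hxt, zero_mul, add_zero, sub_zero]
      rwa [show -x j - -y i = y i - x j by ring])
  have ev1 : ∀ᶠ t in 𝓝[≠] (0:ℂ), ∀ m ∈ Finset.Icc 1 (N * k), ((m : ℕ) : ℂ) * (ℏ + t) ∉ lat τ := by
    rw [eventually_all_finset]
    intro m hm
    have hm1 := (Finset.mem_Icc.mp hm).1
    filter_upwards [lat_pert τ hτ (m * ℏ) m (by exact_mod_cast (by omega : m ≠ 0))] with t ht
    rwa [show (m:ℂ) * (ℏ + t) = m * ℏ + t * m by ring]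
  have ev2 : ∀ᶠ t in 𝓝[≠] (0:ℂ), ℏ + t ∉ lat τ := by
    filter_upwards [lat_pert τ hτ ℏ 1 one_ne_zero] with t ht
    simpa using ht
  have ev3 : ∀ᶠ t in 𝓝[≠] (0:ℂ), ∀ i i' j j', (i, j) ≠ (i', j') →
      (yt t j - xt t i) - (yt t j' - xt t i') ∉ lat τ := by
    simp only [eventually_all]
    intro i i' j j' hne
    have hc : ((j : ℕ) + N * (i : ℕ) : ℂ) - ((j' : ℕ) + N * (i' : ℕ)) ≠ 0 := by
      rw [sub_ne_zero]
      intro h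
      apply hne
      have hn : (j : ℕ) + N * i = j' + N * i' := by exact_mod_cast h
      have hj : (j : ℕ) = j' := by
        have := congrArg (· % N) hn
        simpa [Nat.add_mul_mod_self_left, Nat.mod_eq_of_lt j.2, Nat.mod_eq_of_lt j'.2] using this
      have hi : (i : ℕ) = i' := by
        rw [hj] at hn
        exact Nat.eq_of_mul_eq_mul_left (Nat.pos_of_ne_zero (by rintro rfl; exact i.elim0))
          (Nat.add_left_cancel hn)
      rw [Fin.ext hi, Fin.ext hj]
    filter_upwards [lat_pert τ hτ ((y j - x i) - (y j' - x i')) _ hc] with t ht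
    convert ht using 1
    simp only [hxt, hyt]
    ring
  have ev4 : ∀ᶠ t in 𝓝[≠] (0:ℂ), ∀ i j, yt t j - xt t i ∉ lat τ := by
    simp only [eventually_all]
    intro i j
    have hc : ((1 + (j : ℕ) + N * (i : ℕ) : ℕ) : ℂ) ≠ 0 := by
      exact_mod_cast (by omega)
    filter_upwards [lat_pert τ hτ (y j - x i) _ hc] with t ht
    convert ht using 1
    simp only [hxt, hyt]
    push_cast
    ring
  have hev : (fun t => Lsum (phi τ (ℏ + t)) univ univ (xt t) (yt t) k) =ᶠ[𝓝[≠] 0]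
      fun t => Lsum (phi τ (ℏ + t)) univ univ (fun i => -yt t i) (fun i => -xt t i) k := by
    filter_upwards [ev1, ev2, ev3, ev4] with t h1 h2 h3 h4
    exact phi_generic τ (ℏ + t) hτ h0 (N * k) h2
      (fun m hm1 hm2 => h1 m (Finset.mem_Icc.mpr ⟨hm1, hm2⟩)) (xt t) (yt t) k (by simp) h3 h4
  have := tendsto_nhds_unique ((c1.tendsto.mono_left nhdsWithin_le_nhds).congr' hev)
    (c2.tendsto.mono_left nhdsWithin_le_nhds)
  simpa [hxt, hyt] using this

/-- **Ruijsenaars' elliptic function identities** (the `M = 1` case of the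
`R`-matrix identities): for `1 ≤ k ≤ N`,
`∑_{|I|=k} ( ∏_{i∈I,j∉I} φ(x_i−x_j) ∏_{i∈I}∏_j φ(y_j−x_i)
           − ∏_{i∈I,j∉I} φ(y_j−y_i) ∏_{i∈I}∏_j φ(y_i−x_j) ) = 0`,
where `φ(z) = φ(ℏ,z)` is the Kronecker function. -/
theorem Ruijsenaars_identities
    (τ ℏ : ℂ) (hτ : 0 < τ.im) (hℏ : ℏ ∉ lat τ)
    (N : ℕ) (hN : 1 ≤ N) (k : ℕ) (hk1 : 1 ≤ k) (hkN : k ≤ N)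
    (x y : Fin N → ℂ)
    (hxx : ∀ i j : Fin N, i ≠ j → x i - x j ∉ lat τ)
    (hyy : ∀ i j : Fin N, i ≠ j → y i - y j ∉ lat τ)
    (hyx : ∀ i j : Fin N, y i - x j ∉ lat τ) :
    ∑ I ∈ (univ : Finset (Fin N)).powersetCard k,
      ((∏ i ∈ I, ∏ j ∈ Iᶜ, phi τ ℏ (x i - x j)) * (∏ i ∈ I, ∏ j, phi τ ℏ (y j - x i)) -
        (∏ i ∈ I, ∏ j ∈ Iᶜ, phi τ ℏ (y j - y i)) * (∏ i ∈ I, ∏ j, phi τ ℏ (y i - x j))) = 0 := by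
  by_cases h0 : deriv (theta τ) 0 = 0
  · refine sum_eq_zero fun I hI => ?_
    have hc := (mem_powersetCard.mp hI).2
    obtain ⟨i, hi⟩ : I.Nonempty := card_pos.mp (by omega)
    have hz : ∀ u v, phi τ u v = 0 := fun u v => by simp [phi, h0]
    have e1 : ∏ i ∈ I, ∏ j, phi τ ℏ (y j - x i) = 0 :=
      prod_eq_zero hi (prod_eq_zero (mem_univ (⟨0, hN⟩ : Fin N)) (hz _ _))
    have e2 : ∏ i ∈ I, ∏ j, phi τ ℏ (y i - x j) = 0 :=
      prod_eq_zero hi (prod_eq_zero (mem_univ (⟨0, hN⟩ : Fin N)) (hz _ _))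
    rw [e1, e2]
    ring
  · have h := phi_id τ ℏ hτ h0 hℏ N k x y hxx hyy hyx
    rw [sum_sub_distrib, sub_eq_zero]
    simp only [Lsum, ← compl_eq_univ_sdiff] at h
    rw [h]
    refine sum_congr rfl fun I _ => ?_
    congr 1
    · refine prod_congr rfl fun i _ => prod_congr rfl fun j _ => ?_
      congr 1; ring
    · refine prod_congr rfl fun i _ => prod_congr rfl fun j _ => ?_
      congr 1; ring

end
end

section
/- Let τ ∈ ℂ with Im τ > 0 and let α ∈ ℂ with α ∉ ℤ + τℤ. If f : ℂ → ℂ is entire and satisfies f(z+1) = f(z) and f(z+τ) = exp(2πiα)·f(z) for all z ∈ ℂ, then f is identically zero. -/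
open Complex Finset Filter
open scoped BigOperators Topology

noncomputable section

/-- **Lemma A.1 (Liouville-type lemma):** an entire function with `f(z+1) = f(z)` and
`f(z+τ) = exp(2πiα) f(z)`, `α ∉ ℤ + τℤ`, vanishes identically. -/
theorem entire_quasiperiodic_vanishes
    (τ : ℂ) (hτ : 0 < τ.im) (α : ℂ) (hα : α ∉ lat τ)
    (f : ℂ → ℂ) (hf : Differentiable ℂ f)
    (h1 : ∀ z : ℂ, f (z + 1) = f z)
    (h2 : ∀ z : ℂ, f (z + τ) = Complex.exp (2 * (Real.pi : ℂ) * Complex.I * α) * f z) :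
    ∀ z : ℂ, f z = 0 := by
  set t : ℝ := 2 * Real.pi * α.im / τ.im with ht
  have htτ : t * τ.im = 2 * Real.pi * α.im := by rw [ht]; field_simp
  set g : ℂ → ℂ := fun z => Complex.exp (-(Complex.I * t * z)) * f z with hg
  have hgd : Differentiable ℂ g := by rw [hg]; fun_prop
  have g1 : ∀ z, g (z + 1) = Complex.exp (-(Complex.I * t)) * g z := by
    intro z
    simp only [hg, h1, ← mul_assoc, ← Complex.exp_add]
    ring_nf
  have g2 : ∀ z, g (z + τ) =
      Complex.exp (2 * (Real.pi : ℂ) * Complex.I * α - Complex.I * t * τ) * g z := by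
    intro z
    simp only [hg, h2, ← mul_assoc, ← Complex.exp_add]
    ring_nf
  have p1 : Function.Periodic (fun z => ‖g z‖) 1 := by
    intro z
    simp [g1, Complex.norm_exp]
  have p2 : Function.Periodic (fun z => ‖g z‖) τ := by
    intro z
    have h0 : (2 * (Real.pi : ℂ) * Complex.I * α - Complex.I * t * τ).re = 0 := by
      simp
      linarith
    simp only [g2, norm_mul, Complex.norm_exp, h0, Real.exp_zero, one_mul]
  have hb : Bornology.IsBounded (Set.range g) := by
    obtain ⟨C, hC⟩ := (isCompact_closedBall (0 : ℂ) (1 + τ.im)).exists_bound_of_continuousOn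
      hgd.continuous.continuousOn
    refine isBounded_iff_forall_norm_le.2 ⟨C, ?_⟩
    rintro _ ⟨z, rfl⟩
    set b : ℤ := ⌊z.im / τ.im⌋ with hbdef
    set a : ℤ := ⌊(z - b * τ).re⌋ with hadef
    have e1 : ‖g (z - b * τ)‖ = ‖g z‖ := p2.sub_int_mul_eq b
    have e2 : ‖g (z - b * τ - a * 1)‖ = ‖g (z - b * τ)‖ := p1.sub_int_mul_eq a
    rw [← e1, ← e2]
    apply hC
    rw [mem_closedBall_zero_iff]
    refine (Complex.norm_le_abs_re_add_abs_im _).trans ?_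
    have ha0 := Int.floor_le (z - b * τ).re
    have ha1 := Int.lt_floor_add_one (z - b * τ).re
    have hb0 := Int.floor_le (z.im / τ.im)
    have hb1 := Int.lt_floor_add_one (z.im / τ.im)
    rw [← hadef] at ha0 ha1
    rw [← hbdef] at hb0 hb1
    rw [le_div_iff₀ hτ] at hb0
    rw [div_lt_iff₀ hτ] at hb1
    have r1 : (z - b * τ - a * 1).re = (z - b * τ).re - a := by simp
    have r2 : (z - b * τ - a * 1).im = z.im - b * τ.im := by simp
    rw [r1, r2]
    apply add_le_add
    · rw [abs_le]; constructor <;> linarith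
    · rw [abs_le]; constructor <;> linarith
  have hconst : ∀ z w, g z = g w := fun z w => hgd.apply_eq_apply_of_bounded hb z w
  intro z
  by_contra hz
  have hgz : g z ≠ 0 := mul_ne_zero (Complex.exp_ne_zero _) hz
  have E1 : Complex.exp (-(Complex.I * t)) = 1 := by
    have := g1 z
    rw [hconst (z + 1) z] at this
    exact mul_right_cancel₀ hgz (by rw [← this, one_mul])
  have E2 : Complex.exp (2 * (Real.pi : ℂ) * Complex.I * α - Complex.I * t * τ) = 1 := by
    have := g2 z
    rw [hconst (z + τ) z] at this
    exact mul_right_cancel₀ hgz (by rw [← this, one_mul])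
  obtain ⟨n, hn⟩ := Complex.exp_eq_one_iff.1 E1
  obtain ⟨m, hm⟩ := Complex.exp_eq_one_iff.1 E2
  apply hα
  refine ⟨m, -n, ?_⟩
  have h2pi := Complex.two_pi_I_ne_zero
  apply mul_left_cancel₀ h2pi
  push_cast
  linear_combination hm - τ * hn

end
end
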